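/- Let 𝔤 be a finite-dimensional real (or complex) Lie algebra and D a derivation of 𝔤 such that 𝔤 decomposes as the direct sum of the eigenspaces of D for the eigenvalues -1, 0, and 1. Then there exists a Levi complement (a semisimple subalgebra 𝔰 with 𝔤 = rad(𝔤) ⊕ 𝔰 as vector spaces) of 𝔤 that is invariant under D. -/

import Mathlib

namespace LeviAux
open LieModule

lemma casimir_data {S W : Type*} [LieRing S] [LieAlgebra ℝ S] [FiniteDimensional ℝ S]
    [LieAlgebra.IsKilling ℝ S] [AddCommGroup W] [Module ℝ W] [LieRingModule S W]
    [LieModule ℝ S W] [FiniteDimensional ℝ W] (h : traceForm ℝ S W ≠ 0) :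
    ∃ (n : ℕ) (e e' : Fin n → S), 0 < n ∧ (∀ i, traceForm ℝ S W (e i) (e' i) = 1) ∧
      ∀ (x : S) (F : S →ₗ[ℝ] S →ₗ[ℝ] W),
        ∑ i, F ⁅x, e i⁆ (e' i) + ∑ i, F (e i) ⁅x, e' i⁆ = 0 := by
  classical
  let I : LieIdeal ℝ S :=
    { LinearMap.ker (traceForm ℝ S W) with
      lie_mem := by
        intro x m hm
        have hm' : traceForm ℝ S W m = 0 := hm
        change traceForm ℝ S W ⁅x, m⁆ = 0
        ext y
        rw [traceForm_comm, ← traceForm_apply_lie_apply, traceForm_comm, hm']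
        rfl }
  have hI : ∀ x, x ∈ I ↔ traceForm ℝ S W x = 0 := fun x => Iff.rfl
  let J : LieIdeal ℝ S := I.killingCompl
  have hIJ : IsCompl I J := I.isCompl_killingCompl
  let B : LinearMap.BilinForm ℝ J := (traceForm ℝ S W).restrict J.toSubmodule
  have hBa : ∀ x y : J, B x y = traceForm ℝ S W x y := fun x y => rfl
  have hBsymm : B.IsSymm := ⟨fun x y => by simp only [hBa]; exact traceForm_comm ℝ S W _ _⟩
  have hker : LinearMap.ker B = ⊥ := by
    rw [Submodule.eq_bot_iff]
    intro x hx
    have hxI : (x : S) ∈ I := by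
      rw [hI]
      ext y
      have hy : y ∈ I ⊔ J := by rw [hIJ.sup_eq_top]; trivial
      obtain ⟨a, ha, b, hb, rfl⟩ := LieSubmodule.mem_sup _ _ _ |>.1 hy
      have h1 : traceForm ℝ S W x a = 0 := by
        rw [traceForm_comm, (hI a).1 ha]; rfl
      have h2 : traceForm ℝ S W x b = 0 := by
        have := LinearMap.congr_fun (LinearMap.mem_ker.1 hx) ⟨b, hb⟩
        simpa [hBa] using this
      simp [h1, h2]
    have : (x : S) ∈ I ⊓ J := ⟨hxI, x.2⟩
    rw [hIJ.inf_eq_bot] at this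
    exact Subtype.ext (by simpa using this)
  have hB : B.Nondegenerate := by
    rw [LinearMap.BilinForm.nondegenerate_iff_ker_eq_bot]
    exact hker
  have hJ : 0 < Module.finrank ℝ J := by
    rw [Module.finrank_pos_iff]
    by_contra hn
    rw [LieSubmodule.nontrivial_iff_ne_bot, not_not] at hn
    have : I = ⊤ := by
      have := hIJ.sup_eq_top
      rwa [hn, sup_bot_eq] at this
    apply h
    ext x y
    have hx : x ∈ I := by rw [this]; trivial
    rw [(hI x).1 hx]
    rfl
  let b := Module.finBasis ℝ J
  let b' := B.dualBasis hB b
  have ex1 : ∀ v : J, v = ∑ i, B v (b i) • b' i := fun v => by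
    conv_lhs => rw [← b'.sum_repr v]
    simp only [b', LinearMap.BilinForm.dualBasis_repr_apply]
  have ex2 : ∀ v : J, v = ∑ i, B v (b' i) • b i := fun v => by
    have hb : B.dualBasis hB b' = b := LinearMap.BilinForm.dualBasis_dualBasis hB hBsymm b
    have h1 := (B.dualBasis hB b').sum_repr v
    simp only [LinearMap.BilinForm.dualBasis_repr_apply] at h1
    rw [hb] at h1
    exact h1.symm
  refine ⟨Module.finrank ℝ J, fun i => b i, fun i => b' i, hJ, fun i => ?_, fun x F => ?_⟩
  · have := LinearMap.BilinForm.apply_dualBasis_right (B := B) hB hBsymm b i i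
    simpa [hBa, b'] using this
  · have e1 : ∀ i, ⁅x, (b i : S)⁆ = ∑ j, traceForm ℝ S W ⁅x, (b i : S)⁆ (b' j) • (b j : S) := by
      intro i
      have := congrArg (Subtype.val) (ex2 ⁅x, b i⁆)
      simpa [hBa] using this
    have e2 : ∀ j, ⁅x, (b' j : S)⁆ = ∑ i, traceForm ℝ S W ⁅x, (b' j : S)⁆ (b i) • (b' i : S) := by
      intro i
      have := congrArg (Subtype.val) (ex1 ⁅x, b' i⁆)
      simpa [hBa] using this
    have key : ∀ i j, traceForm ℝ S W ⁅x, (b i : S)⁆ (b' j) =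
        - traceForm ℝ S W ⁅x, (b' j : S)⁆ (b i) := by
      intro i j
      rw [← lie_skew, map_neg, LinearMap.neg_apply, traceForm_apply_lie_apply, traceForm_comm]
    have s1 : ∑ i, F ⁅x, (b i : S)⁆ (b' i) =
        ∑ i, ∑ j, (- traceForm ℝ S W ⁅x, (b' j : S)⁆ (b i)) • F (b j) (b' i) := by
      refine Finset.sum_congr rfl fun i _ => ?_
      rw [e1 i]
      simp only [map_sum, map_smul, LinearMap.sum_apply, LinearMap.smul_apply, key]
    have s2 : ∑ j, F (b j) ⁅x, (b' j : S)⁆ =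
        ∑ j, ∑ i, (traceForm ℝ S W ⁅x, (b' j : S)⁆ (b i)) • F (b j) (b' i) := by
      refine Finset.sum_congr rfl fun i _ => ?_
      conv_lhs => rw [e2 i]
      simp only [map_sum, map_smul]
    rw [s1, s2, Finset.sum_comm, ← Finset.sum_add_distrib]
    refine Finset.sum_eq_zero fun i _ => ?_
    rw [← Finset.sum_add_distrib]
    refine Finset.sum_eq_zero fun j _ => ?_
    simp

lemma perfect {S : Type*} [LieRing S] [LieAlgebra ℝ S] [FiniteDimensional ℝ S]
    [LieAlgebra.IsKilling ℝ S] : LieAlgebra.derivedSeries ℝ S 1 = ⊤ := by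
  set J := LieAlgebra.derivedSeries ℝ S 1 with hJ
  have hc := J.isCompl_killingCompl
  have : IsLieAbelian J.killingCompl := by
    rw [LieAlgebra.abelian_iff_derived_one_eq_bot, eq_bot_iff, ← hc.inf_eq_bot]
    refine le_inf ?_ (LieAlgebra.derivedSeriesOfIdeal_le_self _ _)
    exact LieAlgebra.derivedSeriesOfIdeal_mono le_top 1
  have h0 := LieAlgebra.IsKilling.ideal_eq_bot_of_isLieAbelian J.killingCompl
  have := hc.sup_eq_top
  rwa [h0, sup_bot_eq] at this

/-- `c` is a coboundary. -/
def IsCob {S W : Type*} [LieRing S] [LieAlgebra ℝ S] [AddCommGroup W] [Module ℝ W]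
    [LieRingModule S W] (c : S →ₗ[ℝ] S →ₗ[ℝ] W) : Prop :=
  ∃ f : S →ₗ[ℝ] W, ∀ x y, c x y = ⁅x, f y⁆ - ⁅y, f x⁆ - f ⁅x, y⁆

/-- `c` is a cocycle. -/
def IsCoc {S W : Type*} [LieRing S] [LieAlgebra ℝ S] [AddCommGroup W] [Module ℝ W]
    [LieRingModule S W] (c : S →ₗ[ℝ] S →ₗ[ℝ] W) : Prop :=
  (∀ x y, c x y = - c y x) ∧ ∀ x y z, ⁅x, c y z⁆ + ⁅y, c z x⁆ + ⁅z, c x y⁆ -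
    c ⁅x, y⁆ z - c ⁅y, z⁆ x - c ⁅z, x⁆ y = 0

lemma cob_of_irred {S W : Type*} [LieRing S] [LieAlgebra ℝ S] [FiniteDimensional ℝ S]
    [LieAlgebra.IsKilling ℝ S] [AddCommGroup W] [Module ℝ W] [LieRingModule S W]
    [LieModule ℝ S W] [FiniteDimensional ℝ W] (h : traceForm ℝ S W ≠ 0)
    (hirr : ∀ N : LieSubmodule ℝ S W, N = ⊥ ∨ N = ⊤)
    (c : S →ₗ[ℝ] S →ₗ[ℝ] W) (hc : IsCoc c) : IsCob c := by
  obtain ⟨n, e, e', hn, htr, hinv⟩ := casimir_data h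
  let A : S →ₗ[ℝ] W →ₗ[ℝ] W := (toEnd ℝ S W : S →ₗ[ℝ] Module.End ℝ W)
  have hA : ∀ (x : S) (w : W), A x w = ⁅x, w⁆ := fun x w => rfl
  let C : W →ₗ[ℝ] W := ∑ i, A (e i) ∘ₗ A (e' i)
  have hCa : ∀ w, C w = ∑ i, ⁅e i, ⁅e' i, w⁆⁆ := fun w => by simp [C, hA]
  have hCcomm : ∀ (x : S) (w : W), C ⁅x, w⁆ = ⁅x, C w⁆ := by
    intro x w
    have := hinv x (LinearMap.compl₂ A (A.flip w))
    simp only [LinearMap.compl₂_apply, LinearMap.flip_apply, hA] at this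
    rw [hCa, hCa, lie_sum, eq_comm, ← sub_eq_zero, ← this, ← Finset.sum_sub_distrib,
      ← Finset.sum_add_distrib]
    refine Finset.sum_congr rfl fun i _ => ?_
    rw [leibniz_lie x (e i), leibniz_lie x (e' i), lie_add]
    abel
  have hCtr : LinearMap.trace ℝ W C = n := by
    have htr' : ∀ i, LinearMap.trace ℝ W (A (e i) ∘ₗ A (e' i)) = 1 := htr
    simp [C, map_sum, htr']
  have hC0 : C ≠ 0 := by
    intro h0
    rw [h0, map_zero] at hCtr
    have : (n : ℝ) ≠ 0 := by exact_mod_cast hn.ne'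
    exact this hCtr.symm
  let N : LieSubmodule ℝ S W :=
    { LinearMap.ker C with
      lie_mem := by
        intro x m hm
        have hm' : C m = 0 := hm
        change C ⁅x, m⁆ = 0
        rw [hCcomm, hm', lie_zero] }
  have hN : LinearMap.ker C = ⊥ := by
    rcases hirr N with h1 | h1
    · have : N.toSubmodule = ⊥ := by rw [h1]; rfl
      exact this
    · exfalso
      apply hC0
      have : N.toSubmodule = ⊤ := by rw [h1]; rfl
      exact LinearMap.ker_eq_top.1 this
  let Ce : W ≃ₗ[ℝ] W := LinearEquiv.ofInjectiveEndo C (LinearMap.ker_eq_bot.1 hN)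
  have hCe : ∀ w, C (Ce.symm w) = w := fun w => by
    have := Ce.apply_symm_apply w
    rwa [LinearEquiv.coe_ofInjectiveEndo] at this
  let f : S →ₗ[ℝ] W := ∑ i, A (e i) ∘ₗ c (e' i)
  have hf : ∀ x, f x = ∑ i, ⁅e i, c (e' i) x⁆ := fun x => by simp [f, hA]
  have hdf : ∀ x y, C (c x y) = ⁅x, f y⁆ - ⁅y, f x⁆ - f ⁅x, y⁆ := by
    intro x y
    have i1 := hinv x (LinearMap.compl₂ A (c.flip y))
    have i2 := hinv y (LinearMap.compl₂ A (c.flip x))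
    simp only [LinearMap.compl₂_apply, LinearMap.flip_apply, hA] at i1 i2
    rw [hCa, hf, hf, hf, lie_sum, lie_sum, ← sub_eq_zero]
    have i3 := congrArg₂ (fun a b => a - b) i2 i1
    rw [sub_zero] at i3
    refine Eq.trans ?_ i3
    simp only [← Finset.sum_sub_distrib, ← Finset.sum_add_distrib]
    refine Finset.sum_congr rfl fun i _ => ?_
    have h2 := congrArg (fun w => ⁅e i, w⁆) (hc.2 x y (e' i))
    have a1 := hc.1 y (e' i)
    have a2 := hc.1 ⁅x, y⁆ (e' i)
    have a3 : ⁅e' i, x⁆ = - ⁅x, e' i⁆ := (lie_skew _ _).symm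
    simp only [a1, a2, a3, lie_sub, lie_add, lie_neg, map_neg, LinearMap.neg_apply, lie_zero] at h2
    rw [leibniz_lie x, leibniz_lie y, ← sub_eq_zero]
    refine Eq.trans ?_ h2
    abel
  refine ⟨Ce.symm ∘ₗ f, fun x y => ?_⟩
  apply LinearMap.ker_eq_bot.1 hN
  simp only [map_sub, hCcomm, LinearMap.comp_apply, LinearEquiv.coe_coe, hCe, hdf]


lemma scalar_cob {S : Type*} [LieRing S] [LieAlgebra ℝ S] [FiniteDimensional ℝ S]
    [LieAlgebra.IsKilling ℝ S] (c : S →ₗ[ℝ] S →ₗ[ℝ] ℝ) (h1 : ∀ x y, c x y = - c y x)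
    (h2 : ∀ x y z, c ⁅x, y⁆ z + c ⁅y, z⁆ x + c ⁅z, x⁆ y = 0) :
    ∃ f : S →ₗ[ℝ] ℝ, ∀ x y, c x y = - f ⁅x, y⁆ := by
  have hκ := LieAlgebra.IsKilling.killingForm_nondegenerate ℝ S
  let D0 : S →ₗ[ℝ] S := ((killingForm ℝ S).toDual hκ).symm ∘ₗ c
  have hD0 : ∀ x y, killingForm ℝ S (D0 x) y = c x y := fun x y => by
    simp only [D0, LinearMap.comp_apply, LinearEquiv.coe_coe]
    exact LinearMap.BilinForm.apply_toDual_symm_apply (c x) y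
  have hinj : ∀ a b, (∀ z, killingForm ℝ S a z = killingForm ℝ S b z) → a = b := by
    intro a b hab
    have := LinearMap.ker_eq_bot.1 (LieAlgebra.IsKilling.ker_killingForm_eq_bot ℝ S)
    exact this (LinearMap.ext hab)
  let D : LieDerivation ℝ S S :=
    { D0 with
      leibniz' := by
        intro x y
        apply hinj
        intro z
        change killingForm ℝ S (D0 ⁅x, y⁆) z = killingForm ℝ S (⁅x, D0 y⁆ - ⁅y, D0 x⁆) z
        rw [← lie_skew x (D0 y), ← lie_skew y (D0 x)]
        simp only [map_sub, map_neg, LinearMap.sub_apply, LinearMap.neg_apply]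
        rw [hD0, traceForm_apply_lie_apply, traceForm_apply_lie_apply]
        change _ = - killingForm ℝ S (D0 y) ⁅x, z⁆ - - killingForm ℝ S (D0 x) ⁅y, z⁆
        rw [hD0, hD0]
        have := h2 x y z
        rw [h1 y ⁅x, z⁆, h1 x ⁅y, z⁆, ← lie_skew x z]
        simp only [map_neg, LinearMap.neg_apply]
        linarith }
  obtain ⟨z, hz⟩ := LieDerivation.IsKilling.exists_eq_ad D
  refine ⟨- killingForm ℝ S z, fun x y => ?_⟩
  rw [← hD0]
  have : D0 x = ⁅z, x⁆ := by
    have := LieDerivation.congr_fun hz x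
    have h5 : D x = ⁅z, x⁆ := by simpa using this.symm
    exact h5
  rw [this, traceForm_apply_lie_apply]
  simp

lemma cob_of_trivial {S W : Type*} [LieRing S] [LieAlgebra ℝ S] [FiniteDimensional ℝ S]
    [LieAlgebra.IsKilling ℝ S] [AddCommGroup W] [Module ℝ W] [LieRingModule S W]
    [LieModule ℝ S W] [FiniteDimensional ℝ W] (h : ∀ (x : S) (w : W), ⁅x, w⁆ = 0)
    (c : S →ₗ[ℝ] S →ₗ[ℝ] W) (hc : IsCoc c) : IsCob c := by
  let b := Module.finBasis ℝ W
  have : ∀ i, ∃ f : S →ₗ[ℝ] ℝ, ∀ x y, b.coord i (c x y) = - f ⁅x, y⁆ := by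
    intro i
    refine scalar_cob (c.compr₂ (b.coord i)) (fun x y => ?_) (fun x y z => ?_)
    · simp only [LinearMap.compr₂_apply]
      rw [hc.1, map_neg]
    · have := congrArg (b.coord i) (hc.2 x y z)
      simp only [h, map_sub, map_add, map_zero] at this
      simp only [LinearMap.compr₂_apply]
      linarith
  choose f hf using this
  refine ⟨∑ i, (f i).smulRight (b i), fun x y => ?_⟩
  rw [h, h]
  conv_lhs => rw [← b.sum_repr (c x y)]
  simp only [← Module.Basis.coord_apply, hf]
  simp

lemma whitehead {S : Type*} [LieRing S] [LieAlgebra ℝ S] [FiniteDimensional ℝ S]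
    [LieAlgebra.IsKilling ℝ S] (n : ℕ) : ∀ (W : Type*) [AddCommGroup W] [Module ℝ W]
    [LieRingModule S W] [LieModule ℝ S W] [FiniteDimensional ℝ W], Module.finrank ℝ W = n →
    ∀ (c : S →ₗ[ℝ] S →ₗ[ℝ] W), IsCoc c → IsCob c := by
  induction n using Nat.strong_induction_on with
  | _ n ih =>
  intro W _ _ _ _ _ hn c hc
  by_cases hirr : ∀ N : LieSubmodule ℝ S W, N = ⊥ ∨ N = ⊤
  · by_cases ht : traceForm ℝ S W = 0
    · have hnil := isNilpotent_derivedSeries_of_traceForm_eq_zero ht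
      have hnil2 : LieModule.IsNilpotent S W := by
        rw [LieModule.isNilpotent_iff_forall' (R := ℝ)] at hnil ⊢
        intro x
        have hx : x ∈ LieAlgebra.derivedSeries ℝ S 1 := by rw [perfect]; trivial
        exact hnil ⟨x, hx⟩
      refine cob_of_trivial ?_ c hc
      intro x w
      rcases hirr (maxTrivSubmodule ℝ S W) with h1 | h1
      · rcases subsingleton_or_nontrivial W with hW | hW
        · exact Subsingleton.elim _ _
        · exfalso
          have := LieModule.nontrivial_max_triv_of_isNilpotent ℝ S W
          rw [LieSubmodule.nontrivial_iff_ne_bot] at this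
          exact this h1
      · have : w ∈ maxTrivSubmodule ℝ S W := by rw [h1]; trivial
        exact (mem_maxTrivSubmodule ℝ S W w).1 this x
    · exact cob_of_irred ht hirr c hc
  · push Not at hirr
    obtain ⟨N, hN0, hN1⟩ := hirr
    have hlt1 : Module.finrank ℝ N < n := by
      rw [← hn]
      apply Submodule.finrank_lt
      intro h
      exact hN1 (by rwa [← LieSubmodule.toSubmodule_eq_top])
    have hlt2 : Module.finrank ℝ (W ⧸ N) < n := by
      have h1 := Submodule.finrank_quotient_add_finrank N.toSubmodule
      have : Nontrivial N := (LieSubmodule.nontrivial_iff_ne_bot ℝ S W).2 hN0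
      have h2 : 0 < Module.finrank ℝ N := Module.finrank_pos
      change Module.finrank ℝ (W ⧸ N) + Module.finrank ℝ N = _ at h1
      omega
    let p := LieSubmodule.Quotient.mk' N
    have hpl : ∀ (x : S) (w : W), p ⁅x, w⁆ = ⁅x, p w⁆ := fun x w => LieModuleHom.map_lie p x w
    have hps : Function.Surjective p := LieSubmodule.Quotient.surjective_mk' N
    have hp0 : ∀ w, p w = 0 ↔ w ∈ N := fun w => LieSubmodule.Quotient.mk_eq_zero N
    obtain ⟨fb, hfb⟩ := ih _ hlt2 (W ⧸ N) rfl (c.compr₂ (p : W →ₗ[ℝ] W ⧸ N)) (by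
      refine ⟨fun x y => ?_, fun x y z => ?_⟩
      · simp only [LinearMap.compr₂_apply]
        rw [hc.1, map_neg]
      · have := congrArg p (hc.2 x y z)
        simp only [map_sub, map_add, hpl, map_zero] at this
        exact this)
    obtain ⟨q, hq⟩ := (p : W →ₗ[ℝ] W ⧸ N).exists_rightInverse_of_surjective
      (LinearMap.range_eq_top.2 hps)
    have hq' : ∀ w, p (q w) = w := fun w => LinearMap.congr_fun hq w
    let f : S →ₗ[ℝ] W := q ∘ₗ fb
    have hpf : ∀ x, p (f x) = fb x := fun x => hq' _
    let A : S →ₗ[ℝ] W →ₗ[ℝ] W := (toEnd ℝ S W : S →ₗ[ℝ] Module.End ℝ W)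
    have hA : ∀ (x : S) (w : W), A x w = ⁅x, w⁆ := fun x w => rfl
    let d : S →ₗ[ℝ] S →ₗ[ℝ] W := A.compl₂ f - (A.compl₂ f).flip -
      ((LieAlgebra.ad ℝ S : S →ₗ[ℝ] Module.End ℝ S).compr₂ f)
    have hd : ∀ x y, d x y = ⁅x, f y⁆ - ⁅y, f x⁆ - f ⁅x, y⁆ := fun x y => rfl
    have hmem : ∀ x y, (c - d) x y ∈ N.toSubmodule := by
      intro x y
      change _ ∈ N
      rw [← hp0, LinearMap.sub_apply, LinearMap.sub_apply, hd]
      simp only [map_sub, hpl, hpf]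
      rw [← hfb]
      simp
    let c' : S →ₗ[ℝ] S →ₗ[ℝ] N := LinearMap.mk₂ ℝ (fun x y => ⟨(c - d) x y, hmem x y⟩)
      (fun _ _ _ => Subtype.ext (by simp only [map_add, LinearMap.add_apply]; rfl))
      (fun _ _ _ => Subtype.ext (by simp only [map_smul, LinearMap.smul_apply]; rfl))
      (fun _ _ _ => Subtype.ext (by simp only [map_add]; rfl))
      (fun _ _ _ => Subtype.ext (by simp only [map_smul]; rfl))
    have hc' : ∀ x y, (c' x y : W) = c x y - (⁅x, f y⁆ - ⁅y, f x⁆ - f ⁅x, y⁆) := fun x y => rfl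
    obtain ⟨f', hf'⟩ := ih _ hlt1 N rfl c' (by
      refine ⟨fun x y => Subtype.ext ?_, fun x y z => Subtype.ext ?_⟩
      · rw [LieSubmodule.coe_neg, hc', hc', hc.1, ← lie_skew x y, map_neg]
        abel
      · simp only [LieSubmodule.coe_sub, LieSubmodule.coe_add, LieSubmodule.coe_bracket, hc',
          LieSubmodule.coe_zero]
        have hj : f ⁅⁅x, y⁆, z⁆ + f ⁅⁅y, z⁆, x⁆ + f ⁅⁅z, x⁆, y⁆ = 0 := by
          rw [← map_add, ← map_add]
          have := lie_jacobi x y z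
          rw [← lie_skew x ⁅y, z⁆, ← lie_skew y ⁅z, x⁆, ← lie_skew z ⁅x, y⁆] at this
          have h3 : ⁅⁅x, y⁆, z⁆ + ⁅⁅y, z⁆, x⁆ + ⁅⁅z, x⁆, y⁆ = 0 := by
            rw [← neg_eq_zero, ← this]; abel
          rw [h3, map_zero]
        rw [← neg_eq_zero] at hj
        have h4 := congrArg₂ (fun a b => a + b) (hc.2 x y z) hj
        rw [add_zero] at h4
        refine Eq.trans ?_ h4
        simp only [lie_sub, lie_lie]
        abel)
    refine ⟨f + (N.toSubmodule.subtype ∘ₗ f'), fun x y => ?_⟩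
    have := congrArg Subtype.val (hf' x y)
    rw [hc'] at this
    rw [sub_eq_iff_eq_add] at this
    rw [this]
    simp only [LieSubmodule.coe_sub, LieSubmodule.coe_bracket, LinearMap.add_apply,
      LinearMap.comp_apply, lie_add, Submodule.subtype_apply]
    abel

end LeviAux

namespace LeviAux
open LieModule

lemma split_abelian {g S : Type*} [LieRing S] [LieAlgebra ℝ S] [FiniteDimensional ℝ S]
    [LieAlgebra.IsKilling ℝ S] [LieRing g] [LieAlgebra ℝ g] [FiniteDimensional ℝ g]
    (π : g →ₗ⁅ℝ⁆ S) (hπ : Function.Surjective π)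
    (hab : ∀ x y, π x = 0 → π y = 0 → ⁅x, y⁆ = 0) :
    ∃ τ : S →ₗ⁅ℝ⁆ g, ∀ s, π (τ s) = s := by
  obtain ⟨σ, hσ0⟩ := (π : g →ₗ[ℝ] S).exists_rightInverse_of_surjective
    (LinearMap.range_eq_top.2 hπ)
  have hσ : ∀ s, π (σ s) = s := fun s => LinearMap.congr_fun hσ0 s
  let W : Submodule ℝ g := LinearMap.ker (π : g →ₗ[ℝ] S)
  have hW : ∀ w : W, π w = 0 := fun w => w.2
  have hcmem : ∀ x y, ⁅σ x, σ y⁆ - σ ⁅x, y⁆ ∈ W := fun x y => by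
    change π _ = 0
    rw [map_sub, LieHom.map_lie, hσ, hσ, hσ, sub_self]
  have hbr : ∀ (s : S) (w : W), ⁅σ s, (w : g)⁆ ∈ W := fun s w => by
    change π _ = 0
    rw [LieHom.map_lie, hW, lie_zero]
  let _ : LieRingModule S W :=
    { bracket := fun s w => ⟨⁅σ s, (w : g)⁆, hbr s w⟩
      add_lie := fun x y w => Subtype.ext (by
        change ⁅σ (x + y), (w : g)⁆ = ⁅σ x, (w : g)⁆ + ⁅σ y, (w : g)⁆
        rw [map_add, add_lie])
      lie_add := fun x v w => Subtype.ext (by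
        change ⁅σ x, (v : g) + w⁆ = ⁅σ x, (v : g)⁆ + ⁅σ x, (w : g)⁆
        rw [lie_add])
      leibniz_lie := fun x y w => Subtype.ext (by
        change ⁅σ x, ⁅σ y, (w : g)⁆⁆ = ⁅σ ⁅x, y⁆, (w : g)⁆ + ⁅σ y, ⁅σ x, (w : g)⁆⁆
        have := hab _ w (hcmem x y) (hW w)
        rw [sub_lie, sub_eq_zero] at this
        rw [leibniz_lie, this]) }
  have hb : ∀ (s : S) (w : W), ((⁅s, w⁆ : W) : g) = ⁅σ s, (w : g)⁆ := fun s w => rfl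
  have _ : LieModule ℝ S W :=
    { smul_lie := fun t x w => Subtype.ext (by
        rw [hb, map_smul, smul_lie, Submodule.coe_smul, hb])
      lie_smul := fun t x w => Subtype.ext (by
        rw [hb, Submodule.coe_smul, lie_smul, Submodule.coe_smul, hb]) }
  let c : S →ₗ[ℝ] S →ₗ[ℝ] W := LinearMap.mk₂ ℝ (fun x y => ⟨⁅σ x, σ y⁆ - σ ⁅x, y⁆, hcmem x y⟩)
    (fun _ _ _ => Subtype.ext (by simp only [map_add, add_lie, Submodule.coe_add]; abel))
    (fun _ _ _ => Subtype.ext (by simp only [map_smul, smul_lie, Submodule.coe_smul, smul_sub]))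
    (fun _ _ _ => Subtype.ext (by simp only [map_add, lie_add, Submodule.coe_add]; abel))
    (fun _ _ _ => Subtype.ext (by simp only [map_smul, lie_smul, Submodule.coe_smul, smul_sub]))
  have hc : ∀ x y, (c x y : g) = ⁅σ x, σ y⁆ - σ ⁅x, y⁆ := fun x y => rfl
  obtain ⟨f, hf⟩ := whitehead _ W rfl c (by
    refine ⟨fun x y => Subtype.ext ?_, fun x y z => Subtype.ext ?_⟩
    · rw [Submodule.coe_neg, hc, hc, ← lie_skew (σ x), ← lie_skew x y, map_neg]
      abel
    · simp only [Submodule.coe_sub, Submodule.coe_add, hb, hc, Submodule.coe_zero]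
      have hj : σ ⁅⁅x, y⁆, z⁆ + σ ⁅⁅y, z⁆, x⁆ + σ ⁅⁅z, x⁆, y⁆ = 0 := by
        rw [← map_add, ← map_add]
        have := lie_jacobi x y z
        rw [← lie_skew x ⁅y, z⁆, ← lie_skew y ⁅z, x⁆, ← lie_skew z ⁅x, y⁆] at this
        have h3 : ⁅⁅x, y⁆, z⁆ + ⁅⁅y, z⁆, x⁆ + ⁅⁅z, x⁆, y⁆ = 0 := by
          rw [← neg_eq_zero, ← this]; abel
        rw [h3, map_zero]
      have h4 := congrArg₂ (fun a b => a + b) (lie_jacobi (σ x) (σ y) (σ z)) hj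
      rw [add_zero] at h4
      refine Eq.trans ?_ h4
      rw [← lie_skew (σ ⁅x, y⁆), ← lie_skew (σ ⁅y, z⁆), ← lie_skew (σ ⁅z, x⁆)]
      simp only [lie_sub]
      abel)
  have hf' : ∀ x y, ⁅σ x, σ y⁆ - σ ⁅x, y⁆ = ⁅σ x, (f y : g)⁆ - ⁅σ y, (f x : g)⁆ - f ⁅x, y⁆ := by
    intro x y
    have := congrArg Subtype.val (hf x y)
    rw [hc] at this
    exact this
  refine ⟨{ (σ - W.subtype ∘ₗ f) with
    map_lie' := ?_ }, fun s => ?_⟩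
  · intro x y
    change σ ⁅x, y⁆ - (f ⁅x, y⁆ : g) = ⁅σ x - (f x : g), σ y - (f y : g)⁆
    have h1 := hf' x y
    have h2 := hab _ _ (hW (f x)) (hW (f y))
    rw [lie_sub, sub_lie, sub_lie, h2, ← lie_skew (f x : g), ← sub_eq_zero]
    rw [← sub_eq_zero] at h1
    refine Eq.trans ?_ ((neg_eq_zero.2 h1))
    abel
  · change π (σ s - (f s : g)) = s
    rw [map_sub, hσ, hW, sub_zero]

lemma split_equivariant {g S : Type*} [LieRing S] [LieAlgebra ℝ S]
    [LieRing g] [LieAlgebra ℝ g]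
    (π : g →ₗ⁅ℝ⁆ S)
    (hab : ∀ x y, π x = 0 → π y = 0 → ⁅x, y⁆ = 0)
    (D : g →ₗ[ℝ] g) (hD : ∀ x y, D ⁅x, y⁆ = ⁅D x, y⁆ + ⁅x, D y⁆) (hD3 : ∀ x, D (D (D x)) = D x)
    (E : S →ₗ[ℝ] S) (hE : ∀ x y, E ⁅x, y⁆ = ⁅E x, y⁆ + ⁅x, E y⁆) (hE3 : ∀ x, E (E (E x)) = E x)
    (hDE : ∀ x, π (D x) = E (π x))
    (τ : S →ₗ⁅ℝ⁆ g) (hτ : ∀ s, π (τ s) = s) :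
    ∃ τ' : S →ₗ⁅ℝ⁆ g, (∀ s, π (τ' s) = s) ∧ ∀ s, D (τ' s) = τ' (E s) := by
  let T : (S →ₗ[ℝ] g) → (S →ₗ[ℝ] g) := fun f => D ∘ₗ f - f ∘ₗ E
  have hT : ∀ f x, T f x = D (f x) - f (E x) := fun f x => rfl
  let P : (S →ₗ[ℝ] g) → Prop := fun f => (∀ x, π (f x) = 0) ∧
    ∀ x y, f ⁅x, y⁆ = ⁅f x, τ y⁆ + ⁅τ x, f y⁆
  have hP1 : P (T τ) := by
    refine ⟨fun x => ?_, fun x y => ?_⟩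
    · simp only [hT, map_sub, hDE, LieHom.coe_toLinearMap, hτ, sub_self]
    · simp only [hT, LieHom.coe_toLinearMap, LieHom.map_lie, hD, hE, map_add, sub_lie, lie_sub]
      abel
  have hPT : ∀ f, P f → P (T f) := by
    intro f hf
    refine ⟨fun x => ?_, fun x y => ?_⟩
    · simp only [hT, map_sub, hDE, hf.1, map_zero, sub_self]
    · have h1 := hab _ _ (hP1.1 x) (hf.1 y)
      have h2 := hab _ _ (hf.1 x) (hP1.1 y)
      simp only [hT, LieHom.coe_toLinearMap, sub_lie, lie_sub] at h1 h2
      simp only [hT, hf.2, hD, hE, map_add, sub_lie, lie_sub]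
      rw [sub_eq_zero] at h1 h2
      rw [h1, h2]
      abel
  have hP2 := hPT _ hP1
  have hP4 := hPT _ (hPT _ hP2)
  set f2 := T (T τ) with hf2
  set f4 := T (T f2) with hf4
  let u : S →ₗ[ℝ] g := (-5/4 : ℝ) • f2 + (1/4 : ℝ) • f4
  have hu : ∀ x, u x = (-5/4 : ℝ) • f2 x + (1/4 : ℝ) • f4 x := fun x => rfl
  have hPu : P u := by
    refine ⟨fun x => ?_, fun x y => ?_⟩
    · rw [hu, map_add, map_smul, map_smul, hP2.1, hP4.1]; simp
    · simp only [hu, hP2.2, hP4.2, add_lie, lie_add, smul_lie, lie_smul, smul_add]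
      abel
  refine ⟨{ ((τ : S →ₗ[ℝ] g) + u) with map_lie' := ?_ }, fun s => ?_, fun s => ?_⟩
  · intro x y
    change τ ⁅x, y⁆ + u ⁅x, y⁆ = ⁅τ x + u x, τ y + u y⁆
    rw [LieHom.map_lie, hPu.2, add_lie, lie_add, lie_add, hab _ _ (hPu.1 x) (hPu.1 y)]
    abel
  · change π (τ s + u s) = s
    rw [map_add, hτ, hPu.1, add_zero]
  · change D (τ s + u s) = τ (E s) + u (E s)
    simp only [hu, hf4, hf2, hT, LieHom.coe_toLinearMap, map_add, map_smul, map_sub, hD3, hE3]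
    module

lemma split_main (n : ℕ) : ∀ {g S : Type*} [LieRing S] [LieAlgebra ℝ S] [FiniteDimensional ℝ S]
    [LieAlgebra.IsKilling ℝ S] [LieRing g] [LieAlgebra ℝ g] [FiniteDimensional ℝ g]
    (_ : Module.finrank ℝ g = n)
    (π : g →ₗ⁅ℝ⁆ S) (_ : Function.Surjective π) (_ : LieAlgebra.IsSolvable π.ker)
    (D : g →ₗ[ℝ] g) (_ : ∀ x y, D ⁅x, y⁆ = ⁅D x, y⁆ + ⁅x, D y⁆) (_ : ∀ x, D (D (D x)) = D x)
    (E : S →ₗ[ℝ] S) (_ : ∀ x y, E ⁅x, y⁆ = ⁅E x, y⁆ + ⁅x, E y⁆) (_ : ∀ x, E (E (E x)) = E x)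
    (_ : ∀ x, π (D x) = E (π x)),
    ∃ τ : S →ₗ⁅ℝ⁆ g, (∀ s, π (τ s) = s) ∧ ∀ s, D (τ s) = τ (E s) := by
  induction n using Nat.strong_induction_on with
  | _ n ih =>
  intro g S _ _ _ _ _ _ _ hn π hπ hsol D hD hD3 E hE hE3 hDE
  by_cases hab : ∀ x y, π x = 0 → π y = 0 → ⁅x, y⁆ = 0
  · obtain ⟨τ, hτ⟩ := split_abelian π hπ hab
    exact split_equivariant π hab D hD hD3 E hE hE3 hDE τ hτ
  let a : LieIdeal ℝ g := ⁅π.ker, π.ker⁆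
  have hak : a ≤ π.ker := LieSubmodule.lie_le_left _ _
  have haπ : ∀ x ∈ a, π x = 0 := fun x hx => (LieHom.mem_ker).1 (hak hx)
  have hlta : ∃ x, π x = 0 ∧ x ∉ a := by
    by_contra hcon
    push Not at hcon
    have heq : LieAlgebra.derivedSeriesOfIdeal ℝ g 1 π.ker = π.ker := by
      change a = π.ker
      exact le_antisymm hak (fun x hx => hcon x ((LieHom.mem_ker).1 hx))
    have hall : ∀ k, LieAlgebra.derivedSeriesOfIdeal ℝ g k π.ker = π.ker := by
      intro k
      induction k with
      | zero => rfl
      | succ k ihk => rw [LieAlgebra.derivedSeriesOfIdeal_succ, ihk]; exact heq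
    obtain ⟨k, hk⟩ := LieAlgebra.IsSolvable.solvable ℝ π.ker
    rw [LieIdeal.derivedSeries_eq_bot_iff, hall] at hk
    apply hab
    intro x y hx _
    have : x ∈ π.ker := (LieHom.mem_ker).2 hx
    rw [hk] at this
    have : x = 0 := by simpa using this
    rw [this, zero_lie]
  have hDa : ∀ x ∈ a, D x ∈ a := by
    intro x hx
    have hx' : x ∈ a.toSubmodule := hx
    rw [LieSubmodule.lieIdeal_oper_eq_linear_span'] at hx'
    change D x ∈ a.toSubmodule
    clear hx
    induction hx' using Submodule.span_induction with
    | mem x h =>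
      obtain ⟨u, hu, v, hv, rfl⟩ := h
      rw [hD]
      have hk : ∀ u ∈ π.ker, D u ∈ π.ker := fun u hu => by
        rw [LieHom.mem_ker] at hu ⊢
        rw [hDE, hu, map_zero]
      exact a.add_mem (LieSubmodule.lie_mem_lie (hk u hu) hv) (LieSubmodule.lie_mem_lie hu (hk v hv))
    | zero => simp
    | add x y _ _ hx hy => rw [map_add]; exact Submodule.add_mem _ hx hy
    | smul t x _ hx => rw [map_smul]; exact Submodule.smul_mem _ _ hx
  -- the quotient by `a`
  let p : g →ₗ⁅ℝ⁆ g ⧸ a :=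
    { a.toSubmodule.mkQ with map_lie' := fun {x y} => LieSubmodule.Quotient.mk_bracket _ x y }
  have hps : Function.Surjective p := Submodule.mkQ_surjective a.toSubmodule
  have hp0 : ∀ x, p x = 0 ↔ x ∈ a := fun x => Submodule.Quotient.mk_eq_zero a.toSubmodule
  let πQ0 : g ⧸ a →ₗ[ℝ] S := a.toSubmodule.liftQ (π : g →ₗ[ℝ] S) (fun x hx => haπ x hx)
  have hπQ0 : ∀ x, πQ0 (p x) = π x := fun x => rfl
  let πQ : g ⧸ a →ₗ⁅ℝ⁆ S :=
    { πQ0 with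
      map_lie' := by
        intro x y
        obtain ⟨x, rfl⟩ := hps x
        obtain ⟨y, rfl⟩ := hps y
        change πQ0 ⁅p x, p y⁆ = ⁅πQ0 (p x), πQ0 (p y)⁆
        rw [← LieHom.map_lie, hπQ0, hπQ0, hπQ0, LieHom.map_lie] }
  have hπQ : ∀ x, πQ (p x) = π x := fun x => rfl
  let DQ : g ⧸ a →ₗ[ℝ] g ⧸ a := a.toSubmodule.mapQ a.toSubmodule D (fun x hx => hDa x hx)
  have hDQ : ∀ x, DQ (p x) = p (D x) := fun x => rfl
  have hπQs : Function.Surjective πQ := fun s => by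
    obtain ⟨x, rfl⟩ := hπ s
    exact ⟨p x, rfl⟩
  have habQ : ∀ x y, πQ x = 0 → πQ y = 0 → ⁅x, y⁆ = 0 := by
    intro x y hx hy
    obtain ⟨x, rfl⟩ := hps x
    obtain ⟨y, rfl⟩ := hps y
    rw [← LieHom.map_lie, hp0]
    exact LieSubmodule.lie_mem_lie ((LieHom.mem_ker).2 hx) ((LieHom.mem_ker).2 hy)
  have hfin : FiniteDimensional ℝ (g ⧸ a) :=
    inferInstanceAs (FiniteDimensional ℝ (g ⧸ a.toSubmodule))
  obtain ⟨τ0, hτ0⟩ := split_abelian πQ hπQs habQ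
  obtain ⟨τ1, hτ1, hτ1D⟩ := split_equivariant πQ habQ DQ
    (by
      intro x y
      obtain ⟨x, rfl⟩ := hps x
      obtain ⟨y, rfl⟩ := hps y
      simp only [← LieHom.map_lie, hDQ, hD, map_add])
    (by
      intro x
      obtain ⟨x, rfl⟩ := hps x
      simp only [hDQ, hD3])
    E hE hE3
    (by
      intro x
      obtain ⟨x, rfl⟩ := hps x
      simp only [hDQ, hπQ, hDE]) τ0 hτ0
  let h : LieSubalgebra ℝ g :=
    { LinearMap.eqLocus (p : g →ₗ[ℝ] g ⧸ a) ((τ1.comp π : g →ₗ⁅ℝ⁆ g ⧸ a) : g →ₗ[ℝ] g ⧸ a) with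
      lie_mem' := by
        intro x y hx hy
        have hx' : p x = τ1 (π x) := hx
        have hy' : p y = τ1 (π y) := hy
        change p ⁅x, y⁆ = τ1 (π ⁅x, y⁆)
        simp only [LieHom.map_lie, hx', hy'] }
  have hh : ∀ x, x ∈ h ↔ p x = τ1 (π x) := fun x => Iff.rfl
  have hDh : ∀ x ∈ h, D x ∈ h := by
    intro x hx
    rw [hh] at hx ⊢
    rw [← hDQ, hx, hτ1D, hDE]
  obtain ⟨x0, hx0, hx0a⟩ := hlta
  have hlt : Module.finrank ℝ h < n := by
    rw [← hn]
    apply Submodule.finrank_lt (s := h.toSubmodule)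
    intro htop
    have : x0 ∈ h.toSubmodule := by rw [htop]; trivial
    have : p x0 = τ1 (π x0) := this
    rw [hx0, map_zero, hp0] at this
    exact hx0a this
  let πh : h →ₗ⁅ℝ⁆ S := π.comp h.incl
  have hπh : ∀ x : h, πh x = π x := fun x => rfl
  have hπhs : Function.Surjective πh := by
    intro s
    obtain ⟨y, hy⟩ := hps (τ1 s)
    have h1 : π y = s := by rw [← hπQ, hy, hτ1]
    exact ⟨⟨y, by rw [hh, h1, hy]⟩, h1⟩
  have hsolh : LieAlgebra.IsSolvable πh.ker := by
    let j : πh.ker →ₗ⁅ℝ⁆ π.ker :=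
      { toFun := fun x => ⟨x.1.1, (LieHom.mem_ker).2 ((LieHom.mem_ker).1 x.2)⟩
        map_add' := fun _ _ => rfl
        map_smul' := fun _ _ => rfl
        map_lie' := rfl }
    refine Function.Injective.lieAlgebra_isSolvable (f := j) ?_
    intro x y hxy
    have h1 := congrArg (fun z : π.ker => (z : g)) hxy
    exact Subtype.ext (Subtype.ext h1)
  let Dh : h →ₗ[ℝ] h := D.restrict (p := h.toSubmodule) (q := h.toSubmodule) hDh
  have hDhc : ∀ x : h, (Dh x : g) = D x := fun x => rfl
  obtain ⟨τ, hτ, hτD⟩ := ih _ hlt rfl πh hπhs hsolh Dh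
    (fun x y => Subtype.ext (by
      rw [hDhc, LieSubalgebra.coe_bracket, hD]
      rfl))
    (fun x => Subtype.ext (by simp only [hDhc, hD3]))
    E hE hE3 (fun x => by rw [hπh, hπh, hDhc, hDE])
  refine ⟨h.incl.comp τ, hτ, fun s => ?_⟩
  exact congrArg Subtype.val (hτD s)

lemma radical_quot {g : Type*} [LieRing g] [LieAlgebra ℝ g] [FiniteDimensional ℝ g]
    {S : Type*} [LieRing S] [LieAlgebra ℝ S] [FiniteDimensional ℝ S]
    (p : g →ₗ⁅ℝ⁆ S) (hp : Function.Surjective p) (hk : p.ker = LieAlgebra.radical ℝ g) :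
    LieAlgebra.HasTrivialRadical ℝ S := by
  apply LieAlgebra.hasTrivialRadical_of_no_solvable_ideals
  intro I hI
  obtain ⟨k, hk1⟩ := LieAlgebra.IsSolvable.solvable ℝ I
  rw [LieIdeal.derivedSeries_eq_bot_iff] at hk1
  have h1 : ∀ m, LieAlgebra.derivedSeriesOfIdeal ℝ g m (I.comap p) ≤
      (LieAlgebra.derivedSeriesOfIdeal ℝ S m I).comap p := by
    intro m
    induction m with
    | zero => exact le_rfl
    | succ m ih =>
      rw [LieAlgebra.derivedSeriesOfIdeal_succ, LieAlgebra.derivedSeriesOfIdeal_succ]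
      exact (LieSubmodule.mono_lie ih ih).trans (LieIdeal.comap_bracket_le p)
  have h2 := h1 k
  rw [hk1] at h2
  obtain ⟨l, hl⟩ := LieAlgebra.IsSolvable.solvable ℝ (LieAlgebra.radical ℝ g)
  rw [LieIdeal.derivedSeries_eq_bot_iff] at hl
  have h3 : LieAlgebra.IsSolvable (I.comap p) := by
    refine LieAlgebra.IsSolvable.mk (R := ℝ) (k := l + k) ?_
    rw [LieIdeal.derivedSeries_eq_bot_iff, LieAlgebra.derivedSeriesOfIdeal_add, eq_bot_iff, ← hl]
    refine LieAlgebra.derivedSeriesOfIdeal_mono ?_ l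
    rw [← hk]
    intro x hx
    have := h2 hx
    rw [LieIdeal.mem_comap] at this
    rw [LieHom.mem_ker]
    simpa using this
  rw [LieAlgebra.LieIdeal.solvable_iff_le_radical, ← hk] at h3
  rw [eq_bot_iff]
  intro y hy
  obtain ⟨x, rfl⟩ := hp y
  have := h3 (LieIdeal.mem_comap.2 hy)
  rw [LieHom.mem_ker] at this
  simp [this]

lemma radical_invariant {g : Type*} [LieRing g] [LieAlgebra ℝ g] [FiniteDimensional ℝ g]
    (D : g →ₗ[ℝ] g) (hD : ∀ x y, D ⁅x, y⁆ = ⁅D x, y⁆ + ⁅x, D y⁆) (hD3 : ∀ x, D (D (D x)) = D x) :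
    ∀ x ∈ LieAlgebra.radical ℝ g, D x ∈ LieAlgebra.radical ℝ g := by
  have r1 : ∀ x y, ⁅D (D x), D y⁆ + ⁅D x, D (D y)⁆ = 0 := by
    intro x y
    have h := hD3 ⁅x, y⁆
    simp only [hD, map_add, hD3] at h
    have h' : (3 : ℝ) • (⁅D (D x), D y⁆ + ⁅D x, D (D y)⁆) = 0 := by
      rw [← sub_eq_zero] at h
      rw [← h]
      module
    exact (smul_eq_zero.1 h').resolve_left (by norm_num)
  have r2 : ∀ x y, ⁅D (D x), D (D y)⁆ = - ⁅D x, D y⁆ := by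
    intro x y
    have h := congrArg D (r1 x y)
    simp only [hD, map_add, hD3, map_zero] at h
    have h' : (2 : ℝ) • (⁅D (D x), D (D y)⁆ + ⁅D x, D y⁆) = 0 := by
      rw [← h]
      module
    rw [← sub_eq_zero, sub_neg_eq_add]
    exact (smul_eq_zero.1 h').resolve_left (by norm_num)
  let φ0 : g →ₗ[ℝ] g := LinearMap.id + (3/4 : ℝ) • D + (1/4 : ℝ) • (D ∘ₗ D)
  have hφ0 : ∀ x, φ0 x = x + (3/4 : ℝ) • D x + (1/4 : ℝ) • D (D x) := fun x => rfl
  let φ : g →ₗ⁅ℝ⁆ g :=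
    { φ0 with
      map_lie' := by
        intro x y
        change φ0 ⁅x, y⁆ = ⁅φ0 x, φ0 y⁆
        have e1 := eq_neg_of_add_eq_zero_left (r1 x y)
        simp only [hφ0, hD, map_add, add_lie, lie_add, smul_lie, lie_smul, r2, e1]
        module }
  have hφ : ∀ x, φ x = x + (3/4 : ℝ) • D x + (1/4 : ℝ) • D (D x) := fun x => rfl
  have hφs : Function.Surjective φ := by
    intro x
    refine ⟨x - (3/4 : ℝ) • D x + (1/4 : ℝ) • D (D x), ?_⟩
    simp only [hφ, map_add, map_sub, map_smul, hD3]
    module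
  have hmap : ∀ x ∈ LieAlgebra.radical ℝ g, φ x ∈ LieAlgebra.radical ℝ g := by
    intro x hx
    have hs : LieAlgebra.IsSolvable ((LieAlgebra.radical ℝ g).map φ) := by
      obtain ⟨l, hl⟩ := LieAlgebra.IsSolvable.solvable ℝ (LieAlgebra.radical ℝ g)
      rw [LieIdeal.derivedSeries_eq_bot_iff] at hl
      have h1 : ∀ m, LieAlgebra.derivedSeriesOfIdeal ℝ g m ((LieAlgebra.radical ℝ g).map φ) =
          (LieAlgebra.derivedSeriesOfIdeal ℝ g m (LieAlgebra.radical ℝ g)).map φ := by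
        intro m
        induction m with
        | zero => rfl
        | succ m ih =>
          rw [LieAlgebra.derivedSeriesOfIdeal_succ, LieAlgebra.derivedSeriesOfIdeal_succ, ih,
            LieIdeal.map_bracket_eq φ hφs]
      refine LieAlgebra.IsSolvable.mk (R := ℝ) (k := l) ?_
      rw [LieIdeal.derivedSeries_eq_bot_iff, h1, hl]
      simp
    rw [LieAlgebra.LieIdeal.solvable_iff_le_radical] at hs
    exact hs (LieIdeal.mem_map hx)
  intro x hx
  have h1 := hmap x hx
  have h2 := hmap _ h1
  have : D x = (-7/3 : ℝ) • x + (3 : ℝ) • φ x + (-2/3 : ℝ) • φ (φ x) := by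
    simp only [hφ, map_add, map_smul, hD3]
    module
  rw [this]
  exact add_mem (add_mem (SMulMemClass.smul_mem _ hx) (SMulMemClass.smul_mem _ h1))
    (SMulMemClass.smul_mem _ h2)

end LeviAux

/-- If `D` is a derivation of a finite-dimensional real Lie algebra `𝔤`
such that `𝔤 = 𝔤₋₁(D) ⊕ 𝔤₀(D) ⊕ 𝔤₁(D)` (direct sum of eigenspaces; the independence of
eigenspaces is automatic, so we require that their supremum is everything), then there is a
`D`-invariant Levi complement: a semisimple subalgebra complementing the solvable radical. -/
theorem exists_D_invariant_levi_complement
    (g : Type*) [LieRing g] [LieAlgebra ℝ g] [FiniteDimensional ℝ g]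
    (D : LieDerivation ℝ g g)
    (hgrad : Module.End.eigenspace (D.toLinearMap : Module.End ℝ g) (-1) ⊔
        Module.End.eigenspace (D.toLinearMap : Module.End ℝ g) 0 ⊔
        Module.End.eigenspace (D.toLinearMap : Module.End ℝ g) 1 = ⊤) :
    ∃ s : LieSubalgebra ℝ g, LieAlgebra.IsSemisimple ℝ s ∧
      IsCompl (LieAlgebra.radical ℝ g).toSubmodule s.toSubmodule ∧
      ∀ x ∈ s, D x ∈ s := by
  let D0 : g →ₗ[ℝ] g := D.toLinearMap
  have hD0 : ∀ x, D0 x = D x := fun x => rfl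
  have hD : ∀ x y, D0 ⁅x, y⁆ = ⁅D0 x, y⁆ + ⁅x, D0 y⁆ := by
    intro x y
    simp only [hD0]
    rw [LieDerivation.apply_lie_eq_add, add_comm]
  have hD3 : ∀ x, D0 (D0 (D0 x)) = D0 x := by
    intro x
    have hx : x ∈ (⊤ : Submodule ℝ g) := trivial
    rw [← hgrad] at hx
    obtain ⟨y, hy, c, hc, rfl⟩ := Submodule.mem_sup.1 hx
    obtain ⟨a, ha, b, hb, rfl⟩ := Submodule.mem_sup.1 hy
    rw [Module.End.mem_eigenspace_iff] at ha hb hc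
    have ha' : D0 a = -a := by simpa using! ha
    have hb' : D0 b = 0 := by simpa using! hb
    have hc' : D0 c = c := by simpa using! hc
    simp only [map_add, map_neg, ha', hb', hc', map_zero, neg_neg]
  have hrad := LeviAux.radical_invariant D0 hD hD3
  let r := LieAlgebra.radical ℝ g
  let p : g →ₗ⁅ℝ⁆ g ⧸ r :=
    { r.toSubmodule.mkQ with map_lie' := fun {x y} => LieSubmodule.Quotient.mk_bracket _ x y }
  have hps : Function.Surjective p := Submodule.mkQ_surjective r.toSubmodule
  have hp0 : ∀ x, p x = 0 ↔ x ∈ r := fun x => Submodule.Quotient.mk_eq_zero r.toSubmodule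
  have hk : p.ker = r := by
    ext x
    rw [LieHom.mem_ker, hp0]
  let E : g ⧸ r →ₗ[ℝ] g ⧸ r := r.toSubmodule.mapQ r.toSubmodule D0 (fun x hx => hrad x hx)
  have hE : ∀ x, E (p x) = p (D0 x) := fun x => rfl
  have hfin : FiniteDimensional ℝ (g ⧸ r) :=
    inferInstanceAs (FiniteDimensional ℝ (g ⧸ r.toSubmodule))
  have htriv : LieAlgebra.HasTrivialRadical ℝ (g ⧸ r) := LeviAux.radical_quot p hps hk
  obtain ⟨τ, hτ, hτD⟩ := LeviAux.split_main _ rfl p hps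
    (by rw [hk]; exact LieAlgebra.radicalIsSolvable ℝ g) D0 hD hD3 E
    (by
      intro x y
      obtain ⟨x, rfl⟩ := hps x
      obtain ⟨y, rfl⟩ := hps y
      simp only [← LieHom.map_lie, hE, hD, map_add])
    (by
      intro x
      obtain ⟨x, rfl⟩ := hps x
      simp only [hE, hD3])
    (fun x => (hE x).symm)
  have hinj : Function.Injective τ := fun x y hxy => by rw [← hτ x, hxy, hτ]
  refine ⟨τ.range, ?_, ?_, ?_⟩
  · have : LieAlgebra.IsKilling ℝ τ.range := (LieEquiv.ofInjective τ hinj).isKilling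
    infer_instance
  · rw [isCompl_iff, disjoint_iff, codisjoint_iff]
    constructor
    · rw [Submodule.eq_bot_iff]
      rintro x ⟨hx1, hx2⟩
      obtain ⟨s, rfl⟩ := (LieHom.mem_range τ x).1 hx2
      have := (hp0 _).2 hx1
      rw [hτ] at this
      rw [this, map_zero]
    · rw [eq_top_iff]
      intro x _
      refine Submodule.mem_sup.2 ⟨x - τ (p x), ?_, τ (p x), ?_, by abel⟩
      · change x - τ (p x) ∈ r
        rw [← hp0, map_sub, hτ, sub_self]
      · exact (LieHom.mem_range τ _).2 ⟨_, rfl⟩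
  · intro x hx
    obtain ⟨s, rfl⟩ := (LieHom.mem_range τ x).1 hx
    rw [← hD0, hτD]
    exact (LieHom.mem_range τ _).2 ⟨_, rfl⟩
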